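/- arXiv:2601.18528 — 5 statements merged into one kernel-verified Lean document; each statement's English description precedes it below -/
import Mathlib

section
/- Let (g, [·,·], ▷) be a post-Lie algebra over a commutative ring k, and define the sub-adjacent product x ▷̄ y := x ▷ y + [x, y]. Then (g, −[·,·], ▷̄) is again a post-Lie algebra: −[·,·] is a Lie bracket on g, and for all x, y, z ∈ g one has x ▷̄ (−[y, z]) = −[x ▷̄ y, z] − [y, x ▷̄ z] and (−[x, y]) ▷̄ z = x ▷̄ (y ▷̄ z) − (x ▷̄ y) ▷̄ z − y ▷̄ (x ▷̄ z) + (y ▷̄ x) ▷̄ z. -/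
/-!
All identities are expanded by bilinearity. Skew-symmetry and the Jacobi identity together say
that `[x, ·]` is a derivation: `[[x, y], z] = [x, [y, z]] - [y, [x, z]]`. The compatibility of
`▷̄` with `-[·,·]` holds because `x ▷ ·` and `[x, ·]` are both derivations of the bracket.
In the second post-Lie identity the mixed terms `[x, y ▷ z] + [y, x ▷ z]` are symmetric in
`x, y` and cancel. The associator terms of `▷` contribute `[x, y] ▷ z`, while `-([x, y] ▷ z)`
and its swap contribute `-2 ([x, y] ▷ z)`, so `-([x, y] ▷ z)` remains; the iterated brackets
likewise leave `-[[x, y], z]`.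
-/

/-- If `(g, [·,·], ▷)` is a post-Lie algebra over a commutative ring `k`
and `x ▷̄ y := x ▷ y + [x, y]` is the sub-adjacent product, then `(g, −[·,·], ▷̄)` is
again a post-Lie algebra. -/
theorem postLie_subAdjacent_is_postLie
    {k : Type*} [CommRing k] {g : Type*} [AddCommGroup g] [Module k g]
    (bracket : g →ₗ[k] g →ₗ[k] g) (trv : g →ₗ[k] g →ₗ[k] g)
    (bracket_alt : ∀ x : g, bracket x x = 0)
    (bracket_jacobi : ∀ x y z : g,
      bracket x (bracket y z) + bracket y (bracket z x) + bracket z (bracket x y) = 0)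
    (postLie1 : ∀ x y z : g,
      trv x (bracket y z) = bracket (trv x y) z + bracket y (trv x z))
    (postLie2 : ∀ x y z : g,
      trv (bracket x y) z
        = trv x (trv y z) - trv (trv x y) z - trv y (trv x z) + trv (trv y x) z) :
    ∀ (bb nb : g → g → g),
      (bb = fun x y => trv x y + bracket x y) →
      (nb = fun x y => -bracket x y) →
      (∀ x : g, nb x x = 0) ∧
      (∀ x y z : g, nb x (nb y z) + nb y (nb z x) + nb z (nb x y) = 0) ∧
      (∀ x y z : g, bb x (nb y z) = nb (bb x y) z + nb y (bb x z)) ∧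
      (∀ x y z : g,
        bb (nb x y) z = bb x (bb y z) - bb (bb x y) z - bb y (bb x z) + bb (bb y x) z) := by
  rintro _ _ rfl rfl
  have skew : ∀ x y : g, bracket y x = -bracket x y := by
    intro x y
    have h := bracket_alt (x + y)
    simp only [map_add, LinearMap.add_apply, bracket_alt, zero_add, add_zero] at h
    exact eq_neg_of_add_eq_zero_left h
  have leibniz : ∀ x y z : g,
      bracket (bracket x y) z = bracket x (bracket y z) - bracket y (bracket x z) := by
    intro x y z
    have h := bracket_jacobi x y z
    rw [skew x z, skew (bracket x y) z, map_neg] at h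
    rw [← sub_eq_zero, ← neg_eq_zero, ← h]
    abel
  refine ⟨fun x => ?_, fun x y z => ?_, fun x y z => ?_, fun x y z => ?_⟩
  · simp only [bracket_alt, neg_zero]
  · simpa only [map_neg, neg_neg] using bracket_jacobi x y z
  · simp only [map_add, map_neg, LinearMap.add_apply, postLie1, leibniz]
    abel
  · -- Orienting `[y, x]` as `-[x, y]` makes both occurrences of `[x, y] ▷ z` expand alike.
    simp only [skew x y, map_add, map_neg, LinearMap.add_apply, LinearMap.neg_apply, postLie1,
      postLie2, leibniz]
    abel
end

section
/- Let (g, ⟦·,·⟧) be a Lie algebra over a commutative ring k, equipped with a k-bilinear product ▷ (playing the role of a connection). Define the torsion T(X, Y) := X ▷ Y − Y ▷ X − ⟦X, Y⟧ and the curvature R(X, Y, Z) := X ▷ (Y ▷ Z) − Y ▷ (X ▷ Z) − ⟦X, Y⟧ ▷ Z. Assume the curvature vanishes identically (R ≡ 0) and the torsion is constant, i.e. X ▷ T(Y, Z) = T(X ▷ Y, Z) + T(Y, X ▷ Z) for all X, Y, Z. Then (g, [·,·], ▷) with [X, Y] := −T(X, Y) = ⟦X, Y⟧ − X ▷ Y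 + Y ▷ X is a post-Lie algebra: [·,·] is a Lie bracket on g, and the two post-Lie identities X ▷ [Y, Z] = [X ▷ Y, Z] + [Y, X ▷ Z] and [X, Y] ▷ Z = X ▷ (Y ▷ Z) − (X ▷ Y) ▷ Z − Y ▷ (X ▷ Z) + (Y ▷ X) ▷ Z hold. -/
/-!
Write `[X, Y] = ⟦X, Y⟧ - X ▷ Y + Y ▷ X`. The first post-Lie identity is constancy of the torsion
with the sign reversed, and the second is flatness with `⟦X, Y⟧ = [X, Y] + X ▷ Y - Y ▷ X`
substituted. The Jacobi identity for `[·,·]` is the first Bianchi identity: modulo constancy of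
the torsion and antisymmetry, the cyclic sum of `[X, [Y, Z]]` equals the cyclic sum of
`⟦X, ⟦Y, Z⟧⟧ - R(X, Y, Z)`, and both parts vanish.
-/

/-- Let `(g, ⟦·,·⟧)` be a Lie algebra over a commutative ring `k` with a
bilinear product `▷`. If the curvature vanishes and the torsion
`T(X,Y) = X ▷ Y − Y ▷ X − ⟦X, Y⟧` is constant, then `(g, −T, ▷)` is a post-Lie
algebra. -/
theorem flat_constantTorsion_gives_postLie
    {k : Type*} [CommRing k] {g : Type*} [AddCommGroup g] [Module k g]
    (jb : g →ₗ[k] g →ₗ[k] g) (trv : g →ₗ[k] g →ₗ[k] g)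
    (jb_alt : ∀ X : g, jb X X = 0)
    (jb_jacobi : ∀ X Y Z : g,
      jb X (jb Y Z) + jb Y (jb Z X) + jb Z (jb X Y) = 0)
    (flat : ∀ X Y Z : g,
      trv X (trv Y Z) - trv Y (trv X Z) - trv (jb X Y) Z = 0)
    (constant_torsion : ∀ X Y Z : g,
      trv X (trv Y Z - trv Z Y - jb Y Z)
        = (trv (trv X Y) Z - trv Z (trv X Y) - jb (trv X Y) Z)
          + (trv Y (trv X Z) - trv (trv X Z) Y - jb Y (trv X Z))) :
    ∀ bk : g → g → g,
      (bk = fun X Y => jb X Y - trv X Y + trv Y X) →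
      (∀ X : g, bk X X = 0) ∧
      (∀ X Y Z : g, bk X (bk Y Z) + bk Y (bk Z X) + bk Z (bk X Y) = 0) ∧
      (∀ X Y Z : g, trv X (bk Y Z) = bk (trv X Y) Z + bk Y (trv X Z)) ∧
      (∀ X Y Z : g,
        trv (bk X Y) Z
          = trv X (trv Y Z) - trv (trv X Y) Z - trv Y (trv X Z) + trv (trv Y X) Z) := by
  intro bk hbk
  subst hbk
  have skew : ∀ X Y : g, jb X Y + jb Y X = 0 := fun X Y => by
    have h := jb_alt (X + Y)
    simpa [jb_alt, add_comm] using h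
  refine ⟨fun X => by simp [jb_alt], fun X Y Z => ?_, fun X Y Z => ?_, fun X Y Z => ?_⟩
  · have cX := constant_torsion X Y Z
    have cY := constant_torsion Y Z X
    have cZ := constant_torsion Z X Y
    simp only [map_add, map_sub, LinearMap.add_apply, LinearMap.sub_apply] at cX cY cZ ⊢
    -- Constant torsion turns the terms `-[X, Y ▷ Z] + [X, Z ▷ Y]`, summed cyclically, into
    -- the cyclic sum of `X ▷ [Y, Z]`; what is left is Jacobi for `jb` minus the curvature terms.
    linear_combination (norm := module) jb_jacobi X Y Z + cX + cY + cZ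
      - flat X Y Z - flat Y Z X - flat Z X Y
      - skew (trv X Y) Z - skew (trv Y Z) X - skew (trv Z X) Y
  · have c := constant_torsion X Y Z
    simp only [map_add, map_sub] at c ⊢
    linear_combination (norm := module) -c
  · simp only [map_add, map_sub, LinearMap.add_apply, LinearMap.sub_apply]
    linear_combination (norm := module) -flat X Y Z
end

section
/- Let k be a commutative ring, (g, [·,·], ▷) a post-Lie algebra over k, A a commutative k-algebra, and ρ : g → Der_k(A) a k-linear map into the derivations of A such that ρ([x, y]) = ρ(x) ∘ ρ(y) − ρ(x ▷ y) − ρ(y) ∘ ρ(x) + ρ(y ▷ x) for all x, y ∈ g (composition in End(A)). Equip the k-module A ⊗_k g with the bracket determined by [a ⊗ x, b ⊗ y] := (ab) ⊗ [x, y] and the product determined by (a ⊗ x) ▷ (b ⊗ y) := (a·ρ(x)(b)) ⊗ y + (ab) ⊗ (x ▷ y). Then (A ⊗_k g, [·,·], ▷) is a post-Lie algebra: the bracket is a Lie bracket and the two post-Lie identities u ▷ [v, w] = [u ▷ v, w] + [v, u ▷ w] and [u, v] ▷ w = u ▷ (v ▷ w) − (u ▷ v) ▷ w − v ▷ (u ▷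 w) + (v ▷ u) ▷ w hold for all u, v, w ∈ A ⊗_k g. -/
/-!
The Jacobi and both post-Lie identities are triadditive, so it suffices to check pure tensors.
(For `B u u = 0`, which is quadratic in `u`, the polarised identity `B u v + B v u = 0` is checked
on pure tensors and gives the cross terms.) A pure tensor is `a • (1 ⊗ x)` for the `A`-module
structure on `A ⊗ g`, so each identity on pure tensors is obtained by applying `x ↦ 1 ⊗ x` to the
corresponding identity of `g` and comparing coefficients in `A`. In the second post-Lie identity
the coefficient of `1 ⊗ z` is the rule for `ρ [x, y]`, while the Leibniz terms `ρ x b` and `ρ y a`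
cancel in pairs.
-/

open TensorProduct

/-- A triadditive map vanishing on pure tensors vanishes. -/
lemma eq_zero_of_tmul_eq_zero {k g A M : Type*} [CommRing k] [AddCommGroup g] [Module k g]
    [CommRing A] [Algebra k A] [AddCommGroup M]
    (F : A ⊗[k] g → A ⊗[k] g → A ⊗[k] g → M)
    (h₁ : ∀ u u' v w, F (u + u') v w = F u v w + F u' v w)
    (h₂ : ∀ u v v' w, F u (v + v') w = F u v w + F u v' w)
    (h₃ : ∀ u v w w', F u v (w + w') = F u v w + F u v w')
    (h : ∀ (a b c : A) (x y z : g), F (a ⊗ₜ x) (b ⊗ₜ y) (c ⊗ₜ z) = 0)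
    (u v w : A ⊗[k] g) : F u v w = 0 := by
  induction u using TensorProduct.induction_on with
  | zero => simpa using h₁ 0 0 v w
  | add u u' hu hu' => rw [h₁, hu, hu', add_zero]
  | tmul a x =>
    induction v using TensorProduct.induction_on with
    | zero => simpa using h₂ (a ⊗ₜ x) 0 0 w
    | add v v' hv hv' => rw [h₂, hv, hv', add_zero]
    | tmul b y =>
      induction w using TensorProduct.induction_on with
      | zero => simpa using h₃ (a ⊗ₜ x) (b ⊗ₜ y) 0 0
      | add w w' hw hw' => rw [h₃, hw, hw', add_zero]
      | tmul c z => exact h a b c x y z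

/-- Base change of a post-Lie algebra. Given a post-Lie algebra
`(g, [·,·], ▷)` over `k`, a commutative `k`-algebra `A`, and a `k`-linear map
`ρ : g → Der_k(A)` satisfying the post-Lie extension rule, the `k`-module `A ⊗ₖ g`
with bracket `[a ⊗ x, b ⊗ y] = (ab) ⊗ [x, y]` and product
`(a ⊗ x) ▷ (b ⊗ y) = (a·ρ(x)(b)) ⊗ y + (ab) ⊗ (x ▷ y)` is a post-Lie algebra. -/
theorem postLie_base_change
    {k : Type*} [CommRing k] {g : Type*} [AddCommGroup g] [Module k g]
    {A : Type*} [CommRing A] [Algebra k A]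
    (bracket : g →ₗ[k] g →ₗ[k] g) (trv : g →ₗ[k] g →ₗ[k] g)
    (bracket_alt : ∀ x : g, bracket x x = 0)
    (bracket_jacobi : ∀ x y z : g,
      bracket x (bracket y z) + bracket y (bracket z x) + bracket z (bracket x y) = 0)
    (postLie1 : ∀ x y z : g,
      trv x (bracket y z) = bracket (trv x y) z + bracket y (trv x z))
    (postLie2 : ∀ x y z : g,
      trv (bracket x y) z
        = trv x (trv y z) - trv (trv x y) z - trv y (trv x z) + trv (trv y x) z)
    (ρ : g → A → A)
    (ρ_add : ∀ (x y : g) (a : A), ρ (x + y) a = ρ x a + ρ y a)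
    (ρ_smul : ∀ (c : k) (x : g) (a : A), ρ (c • x) a = c • ρ x a)
    (ρ_additive : ∀ (x : g) (a b : A), ρ x (a + b) = ρ x a + ρ x b)
    (ρ_linear : ∀ (x : g) (c : k) (a : A), ρ x (c • a) = c • ρ x a)
    (ρ_leibniz : ∀ (x : g) (a b : A), ρ x (a * b) = ρ x a * b + a * ρ x b)
    (ρ_rule : ∀ (x y : g) (a : A),
      ρ (bracket x y) a
        = ρ x (ρ y a) - ρ (trv x y) a - ρ y (ρ x a) + ρ (trv y x) a)
    (B P : A ⊗[k] g →ₗ[k] A ⊗[k] g →ₗ[k] A ⊗[k] g)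
    (hB : ∀ (a b : A) (x y : g),
      B (a ⊗ₜ[k] x) (b ⊗ₜ[k] y) = (a * b) ⊗ₜ[k] bracket x y)
    (hP : ∀ (a b : A) (x y : g),
      P (a ⊗ₜ[k] x) (b ⊗ₜ[k] y)
        = (a * ρ x b) ⊗ₜ[k] y + (a * b) ⊗ₜ[k] trv x y) :
    (∀ u : A ⊗[k] g, B u u = 0) ∧
    (∀ u v w : A ⊗[k] g, B u (B v w) + B v (B w u) + B w (B u v) = 0) ∧
    (∀ u v w : A ⊗[k] g, P u (B v w) = B (P u v) w + B v (P u w)) ∧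
    (∀ u v w : A ⊗[k] g,
      P (B u v) w = P u (P v w) - P (P u v) w - P v (P u w) + P (P v u) w) := by
  have tmul_eq (a : A) (x : g) : a ⊗ₜ[k] x = a • ((1 : A) ⊗ₜ[k] x) := by
    rw [TensorProduct.smul_tmul', smul_eq_mul, mul_one]
  have bracket_skew (x y : g) : bracket x y + bracket y x = 0 := by
    have h := bracket_alt (x + y)
    simpa [bracket_alt, add_comm] using h
  have B_skew (u v : A ⊗[k] g) : B u v + B v u = 0 := by
    induction u using TensorProduct.induction_on with
    | zero => simp
    | add u u' hu hu' =>
      simp only [map_add, LinearMap.add_apply]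
      linear_combination (norm := module) hu + hu'
    | tmul a x =>
      induction v using TensorProduct.induction_on with
      | zero => simp
      | add v v' hv hv' =>
        simp only [map_add, LinearMap.add_apply]
        linear_combination (norm := module) hv + hv'
      | tmul b y =>
        rw [hB, hB, mul_comm b a, ← TensorProduct.tmul_add, bracket_skew,
          TensorProduct.tmul_zero]
  refine ⟨fun u => ?_, fun u v w => ?_, fun u v w => ?_, fun u v w => ?_⟩
  · induction u using TensorProduct.induction_on with
    | zero => simp
    | tmul a x => rw [hB, bracket_alt, TensorProduct.tmul_zero]
    | add u v hu hv =>
      simp only [map_add, LinearMap.add_apply]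
      linear_combination (norm := module) hu + hv + B_skew u v
  · refine eq_zero_of_tmul_eq_zero (fun u v w => B u (B v w) + B v (B w u) + B w (B u v))
      ?_ ?_ ?_ ?_ u v w
    iterate 3
      · intros
        simp only [map_add, LinearMap.add_apply]
        abel
    intro a b c x y z
    have h := congrArg (fun t => (1 : A) ⊗ₜ[k] t) (bracket_jacobi x y z)
    simp only [TensorProduct.tmul_add, TensorProduct.tmul_zero] at h
    simp only [hB]
    simp only [tmul_eq (_ * _)]
    linear_combination (norm := module) (a * b * c) • h
  · rw [← sub_eq_zero]
    refine eq_zero_of_tmul_eq_zero (fun u v w => P u (B v w) - (B (P u v) w + B v (P u w)))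
      ?_ ?_ ?_ ?_ u v w
    iterate 3
      · intros
        simp only [map_add, LinearMap.add_apply]
        abel
    intro a b c x y z
    have h := congrArg (fun t => (1 : A) ⊗ₜ[k] t) (postLie1 x y z)
    simp only [TensorProduct.tmul_add] at h
    simp only [hB, hP, map_add, LinearMap.add_apply, ρ_leibniz]
    simp only [tmul_eq (_ * _)]
    linear_combination (norm := module) (a * b * c) • h
  · rw [← sub_eq_zero]
    refine eq_zero_of_tmul_eq_zero (fun u v w => P (B u v) w -
      (P u (P v w) - P (P u v) w - P v (P u w) + P (P v u) w)) ?_ ?_ ?_ ?_ u v w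
    iterate 3
      · intros
        simp only [map_add, LinearMap.add_apply]
        abel
    intro a b c x y z
    have h := congrArg (fun t => (1 : A) ⊗ₜ[k] t) (postLie2 x y z)
    simp only [TensorProduct.tmul_add, TensorProduct.tmul_sub] at h
    simp only [hB, hP, map_add, LinearMap.add_apply, ρ_leibniz, ρ_rule]
    simp only [tmul_eq (_ * _)]
    linear_combination (norm := module) (a * b * c) • h
end

section
/- Let A be a commutative ring and L an A-module carrying a post-Lie-Rinehart structure: an A-bilinear bracket [·,·] and a biadditive product ▷ such that (L, [·,·], ▷) is a post-Lie algebra, together with an anchor ρ assigning to each X ∈ L a derivation ρ(X) of A, with (f X) ▷ Y = f (X ▷ Y) and X ▷ (f Y) = ρ(X)(f)·Y + f·(X ▷ Y) for all f ∈ A. For X ∈ L let δX, δ̃X ∈ End_A(L) be the A-linear endomorphisms δX(Z) = Z ▷ X and δ̃X(Z) = Z ▷ X + [Z, X], and for Y ∈ L and χ ∈ End_A(L) let Y ▷ χ be the A-linear endomorphism (Y ▷ χ)(Z) = Y ▷ χ(Z) − χ(Y ▷ Z). Then every iterated element Y₁ ▷ (Y₂ ▷ (⋯ ▷ (Yₙ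 ▷ δX)⋯)), for n ≥ 0 and X, Y₁, …, Yₙ ∈ L, lies in the subalgebra of End_A(L) generated by the set {δZ : Z ∈ L} ∪ {δ̃Z : Z ∈ L}. Consequently the algebra E\ell_A(L) of elementary endomorphisms, i.e. the subalgebra of End_A(L) generated by all such iterated elements, is contained in the subalgebra generated by {δZ, δ̃Z : Z ∈ L}. -/
/-!
The subalgebra `S` generated by all `δZ` and `δ̃Z` is stable under every operator `χ ↦ Y ▷ χ`.
Indeed `Y ▷ -` is additive, is a derivation for composition, and satisfies
`Y ▷ (f χ) = ρ(Y)(f) χ + f (Y ▷ χ)`, so stability need only be checked on generators, where the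
post-Lie axioms give
`Y ▷ δX = δ(Y ▷ X) - δX ∘ δ̃Y` and `Y ▷ δ̃X = δ̃(Y ▷ X) - δX ∘ δ̃Y`.
Since `δX ∈ S`, all iterated elements lie in `S`.
-/

/-- Let `L` be a post-Lie-Rinehart algebra over a commutative ring `A`,
with `A`-linear endomorphisms `δX(Z) = Z ▷ X`, `δ̃X(Z) = Z ▷ X + [Z, X]` and action
`(Y ▷ χ)(Z) = Y ▷ χ(Z) − χ(Y ▷ Z)`. Every iterated element
`Y₁ ▷ (⋯ ▷ (Yₙ ▷ δX))` lies in the (non-unital) subalgebra of `End_A(L)` generated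
by `{δZ, δ̃Z : Z ∈ L}`; consequently the algebra `Eℓ_A(L)` of elementary
endomorphisms is contained in that subalgebra. -/
theorem elementary_endomorphisms_subalgebra
    {A : Type*} [CommRing A] {L : Type*} [AddCommGroup L] [Module A L]
    (bracket trv : L → L → L) (ρ : L → A → A)
    -- the bracket is A-bilinear (tensorial)
    (bracket_add_left : ∀ X Y Z : L, bracket (X + Y) Z = bracket X Z + bracket Y Z)
    (bracket_add_right : ∀ X Y Z : L, bracket X (Y + Z) = bracket X Y + bracket X Z)
    (bracket_smul_left : ∀ (f : A) (X Y : L), bracket (f • X) Y = f • bracket X Y)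
    (bracket_smul_right : ∀ (f : A) (X Y : L), bracket X (f • Y) = f • bracket X Y)
    -- the product ▷ is biadditive and A-linear in the first argument
    (trv_add_left : ∀ X Y Z : L, trv (X + Y) Z = trv X Z + trv Y Z)
    (trv_add_right : ∀ X Y Z : L, trv X (Y + Z) = trv X Y + trv X Z)
    (trv_smul_left : ∀ (f : A) (X Y : L), trv (f • X) Y = f • trv X Y)
    -- the anchor ρ maps into derivations of A
    (ρ_additive : ∀ (X : L) (a b : A), ρ X (a + b) = ρ X a + ρ X b)
    (ρ_leibniz : ∀ (X : L) (a b : A), ρ X (a * b) = ρ X a * b + a * ρ X b)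
    (trv_leibniz : ∀ (f : A) (X Y : L), trv X (f • Y) = ρ X f • Y + f • trv X Y)
    -- (L, [·,·], ▷) is a post-Lie algebra
    (bracket_alt : ∀ X : L, bracket X X = 0)
    (bracket_jacobi : ∀ X Y Z : L,
      bracket X (bracket Y Z) + bracket Y (bracket Z X) + bracket Z (bracket X Y) = 0)
    (postLie1 : ∀ X Y Z : L,
      trv X (bracket Y Z) = bracket (trv X Y) Z + bracket Y (trv X Z))
    (postLie2 : ∀ X Y Z : L,
      trv (bracket X Y) Z
        = trv X (trv Y Z) - trv (trv X Y) Z - trv Y (trv X Z) + trv (trv Y X) Z)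
    -- δ, δ̃ and the action of L on End_A(L)
    (δ δt : L → Module.End A L)
    (hδ : ∀ X Z : L, δ X Z = trv Z X)
    (hδt : ∀ X Z : L, δt X Z = trv Z X + bracket Z X)
    (act : L → Module.End A L → Module.End A L)
    (hact : ∀ (Y : L) (χ : Module.End A L) (Z : L),
      act Y χ Z = trv Y (χ Z) - χ (trv Y Z)) :
    (∀ (Ys : List L) (X : L),
      Ys.foldr act (δ X)
        ∈ NonUnitalAlgebra.adjoin A
            ({φ | ∃ Z : L, φ = δ Z} ∪ {φ | ∃ Z : L, φ = δt Z})) ∧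
    NonUnitalAlgebra.adjoin A {φ | ∃ (Ys : List L) (X : L), φ = Ys.foldr act (δ X)}
      ≤ NonUnitalAlgebra.adjoin A
          ({φ | ∃ Z : L, φ = δ Z} ∪ {φ | ∃ Z : L, φ = δt Z}) := by
  have bracket_swap (X Y : L) : bracket X Y = -bracket Y X := by
    have h := bracket_alt (X + Y)
    rw [bracket_add_left, bracket_add_right, bracket_add_right, bracket_alt, bracket_alt,
      zero_add, add_zero] at h
    exact eq_neg_of_add_eq_zero_left h
  have trv_zero (Y : L) : trv Y 0 = 0 := by simpa using trv_add_right Y 0 0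
  have trv_neg_left (X Y : L) : trv (-X) Y = -trv X Y := by
    simpa using trv_smul_left (-1) X Y
  have act_δ (Y X : L) : act Y (δ X) = δ (trv Y X) - δ X * δt Y := by
    ext Z
    have h := postLie2 Y Z X
    rw [bracket_swap, trv_neg_left] at h
    simp only [hact, hδ, hδt, LinearMap.sub_apply, Module.End.mul_apply, trv_add_left]
    rw [neg_eq_iff_eq_neg.mp h]
    abel
  have act_δt (Y X : L) : act Y (δt X) = δt (trv Y X) - δ X * δt Y := by
    ext Z
    have h := congrArg (fun φ : Module.End A L => φ Z) (act_δ Y X)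
    simp only [hact, hδ, hδt, LinearMap.sub_apply, Module.End.mul_apply] at h
    simp only [hact, hδ, hδt, LinearMap.sub_apply, Module.End.mul_apply, trv_add_right, postLie1]
    rw [sub_eq_iff_eq_add.mp h]
    abel
  have act_mem (Y : L) (χ : Module.End A L)
      (hχ : χ ∈ NonUnitalAlgebra.adjoin A
        ({φ | ∃ Z : L, φ = δ Z} ∪ {φ | ∃ Z : L, φ = δt Z})) :
      act Y χ ∈ NonUnitalAlgebra.adjoin A
        ({φ | ∃ Z : L, φ = δ Z} ∪ {φ | ∃ Z : L, φ = δt Z}) := by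
    have δ_mem (X : L) : δ X ∈ NonUnitalAlgebra.adjoin A
        ({φ | ∃ Z : L, φ = δ Z} ∪ {φ | ∃ Z : L, φ = δt Z}) :=
      NonUnitalAlgebra.subset_adjoin A (Or.inl ⟨X, rfl⟩)
    have δt_mem (X : L) : δt X ∈ NonUnitalAlgebra.adjoin A
        ({φ | ∃ Z : L, φ = δ Z} ∪ {φ | ∃ Z : L, φ = δt Z}) :=
      NonUnitalAlgebra.subset_adjoin A (Or.inr ⟨X, rfl⟩)
    induction hχ using NonUnitalAlgebra.adjoin_induction with
    | mem φ hφ =>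
      rcases hφ with ⟨X, rfl⟩ | ⟨X, rfl⟩
      · rw [act_δ]
        exact sub_mem (δ_mem _) (mul_mem (δ_mem _) (δt_mem _))
      · rw [act_δt]
        exact sub_mem (δt_mem _) (mul_mem (δ_mem _) (δt_mem _))
    | add φ ψ _ _ ihφ ihψ =>
      have h : act Y (φ + ψ) = act Y φ + act Y ψ := by
        ext Z
        simp only [hact, LinearMap.add_apply, trv_add_right]
        abel
      rw [h]
      exact add_mem ihφ ihψ
    | zero =>
      have h : act Y 0 = 0 := by
        ext Z
        simp [hact, trv_zero]
      rw [h]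
      exact zero_mem _
    | mul φ ψ hφ hψ ihφ ihψ =>
      have h : act Y (φ * ψ) = act Y φ * ψ + φ * act Y ψ := by
        ext Z
        simp only [hact, LinearMap.add_apply, Module.End.mul_apply, map_sub]
        abel
      rw [h]
      exact add_mem (mul_mem ihφ hψ) (mul_mem hφ ihψ)
    | smul f φ hφ ihφ =>
      have h : act Y (f • φ) = ρ Y f • φ + f • act Y φ := by
        ext Z
        simp only [hact, LinearMap.add_apply, LinearMap.smul_apply, trv_leibniz, smul_sub]
        abel
      rw [h]
      exact add_mem (SMulMemClass.smul_mem _ hφ) (SMulMemClass.smul_mem _ ihφ)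
  have iterated_mem (Ys : List L) (X : L) :
      Ys.foldr act (δ X) ∈ NonUnitalAlgebra.adjoin A
        ({φ | ∃ Z : L, φ = δ Z} ∪ {φ | ∃ Z : L, φ = δt Z}) := by
    induction Ys with
    | nil => exact NonUnitalAlgebra.subset_adjoin A (Or.inl ⟨X, rfl⟩)
    | cons Y Ys ih => exact act_mem Y _ ih
  refine ⟨iterated_mem, NonUnitalAlgebra.adjoin_le ?_⟩
  rintro _ ⟨Ys, X, rfl⟩
  exact iterated_mem Ys X
end

section
/- Let A be a commutative ring and L an A-module carrying a post-Lie-Rinehart structure: an A-bilinear bracket [·,·] and a biadditive product ▷ such that (L, [·,·], ▷) is a post-Lie algebra, together with an anchor ρ assigning to each X ∈ L a derivation ρ(X) of A, with (f X) ▷ Y = f (X ▷ Y) and X ▷ (f Y) = ρ(X)(f)·Y + f·(X ▷ Y). For X ∈ L let δX, δ̃X ∈ End_A(L) be δX(Z) = Z ▷ X and δ̃X(Z) = Z ▷ X + [Z, X], and for Y ∈ L, χ ∈ End_A(L) let (Y ▷ χ)(Z) = Y ▷ χ(Z) − χ(Y ▷ Z). Then the algebra of elementary endomorphisms E\ell_A(L)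 (the subalgebra of End_A(L) generated by {Y₁ ▷ ⋯ ▷ Yₙ ▷ δX : n ≥ 0, X, Yᵢ ∈ L}) equals the set of A-linear combinations of compositions δX ∘ φ₁ ∘ ⋯ ∘ φ_k with k ≥ 0, X ∈ L, and each φᵢ ∈ {δY, δ̃Y : Y ∈ L}; that is, E\ell_A(L) consists exactly of the elements of the algebra generated by {δX, δ̃X : X ∈ L} whose leftmost factor is of the form δX. In particular, δX ∘ δ̃Y₁ ∘ ⋯ ∘ δ̃Y_k ∈ E\ell_A(L) for all X, Y₁, …, Y_k ∈ L. -/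
/-!
The action of `L` on `End_A(L)` is a derivation for composition, and the post-Lie identities give
`Y ▷ δX = δ(Y ▷ X) − δX ∘ δ̃Y` and `Y ▷ δ̃X = δ̃(Y ▷ X) − δX ∘ δ̃Y`.

Let `E` be the algebra of elementary endomorphisms and `S` the span of the words in `δ, δ̃` with
leftmost factor some `δX`. `S` is closed under products, and by the two formulas it is stable under
the action; as it contains every `δX`, it contains `E`. Conversely, `E` is stable under the action
and, crucially, under right multiplication by every `δ̃Y`: for `χ = δX` this is the first formula, and
`(Y₁ ▷ χ) ∘ δ̃Y = Y₁ ▷ (χ ∘ δ̃Y) − χ ∘ δ̃(Y₁ ▷ Y) + (χ ∘ δY) ∘ δ̃Y₁` propagates it to all generators.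
Hence `E` contains every word starting with `δX`.
-/

/-- Let `L` be a post-Lie-Rinehart algebra over a commutative ring `A`,
with `A`-linear endomorphisms `δX(Z) = Z ▷ X`, `δ̃X(Z) = Z ▷ X + [Z, X]` and action
`(Y ▷ χ)(Z) = Y ▷ χ(Z) − χ(Y ▷ Z)`. The algebra `Eℓ_A(L)` of elementary
endomorphisms (the non-unital subalgebra of `End_A(L)` generated by the iterated
elements `Y₁ ▷ ⋯ ▷ Yₙ ▷ δX`) coincides with the set of `A`-linear combinations of
compositions `δX ∘ φ₁ ∘ ⋯ ∘ φ_k` where each `φᵢ ∈ {δY, δ̃Y : Y ∈ L}`; in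
particular `δX ∘ δ̃Y₁ ∘ ⋯ ∘ δ̃Y_k ∈ Eℓ_A(L)`. -/
theorem elementary_endomorphisms_eq_leftmost_delta
    {A : Type*} [CommRing A] {L : Type*} [AddCommGroup L] [Module A L]
    (bracket trv : L → L → L) (ρ : L → A → A)
    -- the bracket is A-bilinear (tensorial)
    (bracket_add_left : ∀ X Y Z : L, bracket (X + Y) Z = bracket X Z + bracket Y Z)
    (bracket_add_right : ∀ X Y Z : L, bracket X (Y + Z) = bracket X Y + bracket X Z)
    (bracket_smul_left : ∀ (f : A) (X Y : L), bracket (f • X) Y = f • bracket X Y)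
    (bracket_smul_right : ∀ (f : A) (X Y : L), bracket X (f • Y) = f • bracket X Y)
    -- the product ▷ is biadditive and A-linear in the first argument
    (trv_add_left : ∀ X Y Z : L, trv (X + Y) Z = trv X Z + trv Y Z)
    (trv_add_right : ∀ X Y Z : L, trv X (Y + Z) = trv X Y + trv X Z)
    (trv_smul_left : ∀ (f : A) (X Y : L), trv (f • X) Y = f • trv X Y)
    -- the anchor ρ maps into derivations of A
    (ρ_additive : ∀ (X : L) (a b : A), ρ X (a + b) = ρ X a + ρ X b)
    (ρ_leibniz : ∀ (X : L) (a b : A), ρ X (a * b) = ρ X a * b + a * ρ X b)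
    (trv_leibniz : ∀ (f : A) (X Y : L), trv X (f • Y) = ρ X f • Y + f • trv X Y)
    -- (L, [·,·], ▷) is a post-Lie algebra
    (bracket_alt : ∀ X : L, bracket X X = 0)
    (bracket_jacobi : ∀ X Y Z : L,
      bracket X (bracket Y Z) + bracket Y (bracket Z X) + bracket Z (bracket X Y) = 0)
    (postLie1 : ∀ X Y Z : L,
      trv X (bracket Y Z) = bracket (trv X Y) Z + bracket Y (trv X Z))
    (postLie2 : ∀ X Y Z : L,
      trv (bracket X Y) Z
        = trv X (trv Y Z) - trv (trv X Y) Z - trv Y (trv X Z) + trv (trv Y X) Z)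
    -- δ, δ̃ and the action of L on End_A(L)
    (δ δt : L → Module.End A L)
    (hδ : ∀ X Z : L, δ X Z = trv Z X)
    (hδt : ∀ X Z : L, δt X Z = trv Z X + bracket Z X)
    (act : L → Module.End A L → Module.End A L)
    (hact : ∀ (Y : L) (χ : Module.End A L) (Z : L),
      act Y χ Z = trv Y (χ Z) - χ (trv Y Z)) :
    ((NonUnitalAlgebra.adjoin A
        {φ | ∃ (Ys : List L) (X : L), φ = Ys.foldr act (δ X)} : Set (Module.End A L))
      = (Submodule.span A
          {φ : Module.End A L | ∃ (X : L) (l : List (Module.End A L)),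
            (∀ ψ ∈ l, (∃ Y : L, ψ = δ Y) ∨ (∃ Y : L, ψ = δt Y)) ∧
            φ = l.foldl (· * ·) (δ X)} : Set (Module.End A L))) ∧
    (∀ (X : L) (Ys : List L),
      δ X * (Ys.map δt).prod
        ∈ NonUnitalAlgebra.adjoin A
            {φ | ∃ (Ys' : List L) (X' : L), φ = Ys'.foldr act (δ X')}) := by
  have trv_zero : ∀ X : L, trv X 0 = 0 := fun X => by
    have h := trv_add_right X 0 0
    simpa using h
  have bracket_neg : ∀ X Y : L, bracket X Y = -bracket Y X := fun X Y => by
    have h := bracket_alt (X + Y)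
    rw [bracket_add_left, bracket_add_right, bracket_add_right, bracket_alt, bracket_alt] at h
    rw [eq_neg_iff_add_eq_zero]
    simpa using h
  have trv_neg_left : ∀ X Y : L, trv (-X) Y = -trv X Y := fun X Y => by
    simpa using trv_smul_left (-1) X Y
  have act_zero : ∀ Y : L, act Y 0 = 0 := fun Y => by
    ext Z
    simp [hact, trv_zero]
  have act_add : ∀ (Y : L) (χ ψ : Module.End A L), act Y (χ + ψ) = act Y χ + act Y ψ := by
    intro Y χ ψ
    ext Z
    simp only [hact, LinearMap.add_apply, trv_add_right]
    abel
  have act_smul : ∀ (Y : L) (a : A) (χ : Module.End A L),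
      act Y (a • χ) = ρ Y a • χ + a • act Y χ := by
    intro Y a χ
    ext Z
    simp only [hact, LinearMap.add_apply, LinearMap.smul_apply, trv_leibniz, smul_sub]
    abel
  have act_mul : ∀ (Y : L) (χ ψ : Module.End A L),
      act Y (χ * ψ) = act Y χ * ψ + χ * act Y ψ := by
    intro Y χ ψ
    ext Z
    simp only [hact, LinearMap.add_apply, Module.End.mul_apply, map_sub]
    abel
  have act_δ : ∀ X Y : L, act Y (δ X) = δ (trv Y X) - δ X * δt Y := by
    intro X Y
    ext Z
    have h := postLie2 Y Z X
    rw [bracket_neg, trv_neg_left] at h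
    simp only [hact, LinearMap.sub_apply, Module.End.mul_apply, hδ, hδt, trv_add_left]
    have h' : trv (bracket Z Y) X
        = -(trv Y (trv Z X) - trv (trv Y Z) X - trv Z (trv Y X) + trv (trv Z Y) X) := by
      rw [← h, neg_neg]
    rw [h']
    abel
  have act_δt : ∀ X Y : L, act Y (δt X) = δt (trv Y X) - δ X * δt Y := by
    intro X Y
    ext Z
    have h := LinearMap.congr_fun (act_δ X Y) Z
    simp only [hact, LinearMap.sub_apply, Module.End.mul_apply, hδ] at h
    simp only [hact, LinearMap.sub_apply, Module.End.mul_apply, hδ, hδt X, hδt (trv Y X),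
      trv_add_right, postLie1]
    rw [← sub_eq_zero] at h ⊢
    rw [← h]
    abel
  set G : Set (Module.End A L) := {φ | ∃ (Ys : List L) (X : L), φ = Ys.foldr act (δ X)} with hG
  set W : Set (Module.End A L) := {φ : Module.End A L | ∃ (X : L) (l : List (Module.End A L)),
            (∀ ψ ∈ l, (∃ Y : L, ψ = δ Y) ∨ (∃ Y : L, ψ = δt Y)) ∧
            φ = l.foldl (· * ·) (δ X)} with hW
  set E := NonUnitalAlgebra.adjoin A G with hE
  set S := Submodule.span A W with hS
  have foldl_mul : ∀ (l : List (Module.End A L)) (a : Module.End A L),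
      l.foldl (· * ·) a = a * l.prod := by
    intro l
    induction l with
    | nil => simp
    | cons b l ih =>
      intro a
      rw [List.foldl_cons, ih, List.prod_cons, mul_assoc]
  have δ_mem_E : ∀ X, δ X ∈ E := fun X => NonUnitalAlgebra.subset_adjoin A ⟨[], X, rfl⟩
  have E_act : ∀ (Y : L) (χ : Module.End A L), χ ∈ E → act Y χ ∈ E := by
    intro Y χ hχ
    induction hχ using NonUnitalAlgebra.adjoin_induction with
    | mem x hx =>
      obtain ⟨Ys, X, rfl⟩ := hx
      exact NonUnitalAlgebra.subset_adjoin A ⟨Y :: Ys, X, rfl⟩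
    | add x y _ _ ihx ihy => rw [act_add]; exact add_mem ihx ihy
    | zero => rw [act_zero]; exact zero_mem _
    | mul x y hx hy ihx ihy =>
      rw [act_mul]; exact add_mem (mul_mem ihx hy) (mul_mem hx ihy)
    | smul r x hx ih =>
      rw [act_smul]; exact add_mem (SMulMemClass.smul_mem _ hx) (SMulMemClass.smul_mem _ ih)
  have G_mul_δt : ∀ (Ys : List L) (X Y : L), Ys.foldr act (δ X) * δt Y ∈ E := by
    intro Ys X
    induction Ys with
    | nil =>
      intro Y
      have h : δ X * δt Y = δ (trv Y X) - act Y (δ X) := by rw [act_δ]; abel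
      rw [List.foldr_nil, h]
      exact sub_mem (δ_mem_E _) (E_act _ _ (δ_mem_E _))
    | cons Y₁ Ys ih =>
      intro Y
      rw [List.foldr_cons]
      have hmem : Ys.foldr act (δ X) ∈ E := NonUnitalAlgebra.subset_adjoin A ⟨Ys, X, rfl⟩
      generalize Ys.foldr act (δ X) = χ at ih hmem ⊢
      have h : act Y₁ χ * δt Y
          = act Y₁ (χ * δt Y) - χ * δt (trv Y₁ Y) + χ * (δ Y * δt Y₁) := by
        rw [act_mul, act_δt, mul_sub]; abel
      have hδδt : δ Y * δt Y₁ ∈ E := by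
        have h : δ Y * δt Y₁ = δ (trv Y₁ Y) - act Y₁ (δ Y) := by rw [act_δ]; abel
        rw [h]
        exact sub_mem (δ_mem_E _) (E_act _ _ (δ_mem_E _))
      rw [h]
      exact add_mem (sub_mem (E_act _ _ (ih Y)) (ih _)) (mul_mem hmem hδδt)
  have E_mul_δt : ∀ (Y : L) (χ : Module.End A L), χ ∈ E → χ * δt Y ∈ E := by
    intro Y χ hχ
    induction hχ using NonUnitalAlgebra.adjoin_induction with
    | mem x hx =>
      obtain ⟨Ys, X, rfl⟩ := hx
      exact G_mul_δt Ys X Y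
    | add x y _ _ ihx ihy => rw [add_mul]; exact add_mem ihx ihy
    | zero => rw [zero_mul]; exact zero_mem _
    | mul x y hx hy ihx ihy => rw [mul_assoc]; exact mul_mem hx ihy
    | smul r x hx ih => rw [smul_mul_assoc]; exact SMulMemClass.smul_mem _ ih
  have E_mul_word : ∀ (l : List (Module.End A L)),
      (∀ ψ ∈ l, (∃ Y : L, ψ = δ Y) ∨ (∃ Y : L, ψ = δt Y)) →
      ∀ χ ∈ E, l.foldl (· * ·) χ ∈ E := by
    intro l
    induction l with
    | nil => intro _ χ hχ; exact hχ
    | cons b l ih =>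
      intro hl χ hχ
      rw [List.foldl_cons]
      refine ih (fun ψ hψ => hl ψ (List.mem_cons_of_mem _ hψ)) _ ?_
      rcases hl b List.mem_cons_self with ⟨Y, rfl⟩ | ⟨Y, rfl⟩
      · exact mul_mem hχ (δ_mem_E Y)
      · exact E_mul_δt Y χ hχ
  have δ_mem_S : ∀ X, δ X ∈ S := fun X => Submodule.subset_span ⟨X, [], by simp, rfl⟩
  have S_mul_letter : ∀ φ : Module.End A L, ((∃ Y : L, φ = δ Y) ∨ (∃ Y : L, φ = δt Y)) →
      ∀ χ ∈ S, χ * φ ∈ S := by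
    intro φ hφ χ hχ
    induction hχ using Submodule.span_induction with
    | mem x hx =>
      obtain ⟨X, l, hl, rfl⟩ := hx
      refine Submodule.subset_span ⟨X, l ++ [φ], ?_, by simp⟩
      intro ψ hψ
      rcases List.mem_append.1 hψ with h | h
      · exact hl ψ h
      · rw [List.mem_singleton.1 h]; exact hφ
    | zero => rw [zero_mul]; exact zero_mem _
    | add x y _ _ ihx ihy => rw [add_mul]; exact add_mem ihx ihy
    | smul a x _ ih => rw [smul_mul_assoc]; exact S.smul_mem _ ih
  have S_mul_word : ∀ (l : List (Module.End A L)),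
      (∀ ψ ∈ l, (∃ Y : L, ψ = δ Y) ∨ (∃ Y : L, ψ = δt Y)) →
      ∀ χ ∈ S, l.foldl (· * ·) χ ∈ S := by
    intro l
    induction l with
    | nil => intro _ χ hχ; exact hχ
    | cons b l ih =>
      intro hl χ hχ
      rw [List.foldl_cons]
      exact ih (fun ψ hψ => hl ψ (List.mem_cons_of_mem _ hψ)) _
        (S_mul_letter b (hl b List.mem_cons_self) χ hχ)
  have S_mul : ∀ χ ∈ S, ∀ ψ ∈ S, χ * ψ ∈ S := by
    intro χ hχ ψ hψ
    induction hψ using Submodule.span_induction with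
    | mem x hx =>
      obtain ⟨X, l, hl, rfl⟩ := hx
      have h := S_mul_word l hl (χ * δ X) (S_mul_letter _ (Or.inl ⟨X, rfl⟩) χ hχ)
      rwa [foldl_mul, mul_assoc, ← foldl_mul l (δ X)] at h
    | zero => rw [mul_zero]; exact zero_mem _
    | add x y _ _ ihx ihy => rw [mul_add]; exact add_mem ihx ihy
    | smul a x _ ih => rw [mul_smul_comm]; exact S.smul_mem _ ih
  have S_mul_act_letter : ∀ (Y : L) (φ : Module.End A L),
      ((∃ X : L, φ = δ X) ∨ (∃ X : L, φ = δt X)) → ∀ χ ∈ S, χ * act Y φ ∈ S := by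
    intro Y φ hφ χ hχ
    have hword : ∀ X : L, χ * (δ X * δt Y) ∈ S := fun X => by
      rw [← mul_assoc]
      exact S_mul_letter _ (Or.inr ⟨Y, rfl⟩) _ (S_mul_letter _ (Or.inl ⟨X, rfl⟩) χ hχ)
    rcases hφ with ⟨X, rfl⟩ | ⟨X, rfl⟩
    · rw [act_δ, mul_sub]
      exact sub_mem (S_mul_letter _ (Or.inl ⟨_, rfl⟩) χ hχ) (hword X)
    · rw [act_δt, mul_sub]
      exact sub_mem (S_mul_letter _ (Or.inr ⟨_, rfl⟩) χ hχ) (hword X)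
  have act_word : ∀ (Y : L) (l : List (Module.End A L)),
      (∀ ψ ∈ l, (∃ Y : L, ψ = δ Y) ∨ (∃ Y : L, ψ = δt Y)) →
      ∀ χ ∈ S, act Y χ ∈ S → act Y (l.foldl (· * ·) χ) ∈ S := by
    intro Y l
    induction l with
    | nil => intro _ χ _ h; exact h
    | cons b l ih =>
      intro hl χ hχ hact'
      have hb := hl b List.mem_cons_self
      rw [List.foldl_cons]
      refine ih (fun ψ hψ => hl ψ (List.mem_cons_of_mem _ hψ)) _ (S_mul_letter b hb χ hχ) ?_
      rw [act_mul]
      exact add_mem (S_mul_letter b hb _ hact') (S_mul_act_letter Y b hb χ hχ)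
  have S_act : ∀ (Y : L) (χ : Module.End A L), χ ∈ S → act Y χ ∈ S := by
    intro Y χ hχ
    induction hχ using Submodule.span_induction with
    | mem x hx =>
      obtain ⟨X, l, hl, rfl⟩ := hx
      refine act_word Y l hl (δ X) (δ_mem_S X) ?_
      rw [act_δ]
      exact sub_mem (δ_mem_S _) (S_mul_letter _ (Or.inr ⟨Y, rfl⟩) _ (δ_mem_S X))
    | zero => rw [act_zero]; exact zero_mem _
    | add x y _ _ ihx ihy => rw [act_add]; exact add_mem ihx ihy
    | smul a x hx ih => rw [act_smul]; exact add_mem (S.smul_mem _ hx) (S.smul_mem _ ih)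
  refine ⟨Set.Subset.antisymm ?_ ?_, ?_⟩
  · intro χ hχ
    change χ ∈ S
    replace hχ : χ ∈ NonUnitalAlgebra.adjoin A G := hχ
    induction hχ using NonUnitalAlgebra.adjoin_induction with
    | mem x hx =>
      obtain ⟨Ys, X, rfl⟩ := hx
      induction Ys with
      | nil => exact δ_mem_S X
      | cons Y Ys ih => exact S_act Y _ ih
    | add x y _ _ ihx ihy => exact add_mem ihx ihy
    | zero => exact zero_mem _
    | mul x y hx hy ihx ihy => exact S_mul x ihx y ihy
    | smul r x hx ih => exact S.smul_mem _ ih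
  · intro χ hχ
    change χ ∈ E
    replace hχ : χ ∈ Submodule.span A W := hχ
    induction hχ using Submodule.span_induction with
    | mem x hx =>
      obtain ⟨X, l, hl, rfl⟩ := hx
      exact E_mul_word l hl _ (δ_mem_E X)
    | zero => exact zero_mem _
    | add x y _ _ ihx ihy => exact add_mem ihx ihy
    | smul a x _ ih => exact SMulMemClass.smul_mem _ ih
  · intro X Ys
    rw [← foldl_mul]
    refine E_mul_word _ ?_ _ (δ_mem_E X)
    intro ψ hψ
    obtain ⟨Y, _, rfl⟩ := List.mem_map.1 hψ
    exact Or.inr ⟨Y, rfl⟩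
end
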